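/- Assume the coordinate ordering condition. Then for every tuple P = (p_d; …; p_1) ∈ P_{1,…,d} and every 1 ≤ n ≤ d, the coefficient C_n^{(d)}(P) is strictly positive. -/

import Mathlib

open Real Finset Filter

noncomputable section

/-- Index sets of a Gatzouras–Lalley structure. -/
def glIdx (Nf : List ℕ → ℕ) : ℕ → Finset (List ℕ)
  | 0 => {[]}
  | n + 1 => (glIdx Nf n).biUnion fun u =>
      (Finset.range (Nf u)).image fun j => u ++ [j + 1]

/-- Entropy of a vector `p` on index set `I`. -/
def glEnt (I : Finset (List ℕ)) (p : List ℕ → ℝ) : ℝ :=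
  -∑ i ∈ I, p i * Real.log (p i)

/-- Lyapunov exponent `χ_ℓ(p)` for `p` on index set `I`. -/
def glLyap (lam : List ℕ → ℝ) (I : Finset (List ℕ)) (ℓ : ℕ) (p : List ℕ → ℝ) : ℝ :=
  -∑ i ∈ I, p i * Real.log (lam (i.take ℓ))

def IsProbVec (I : Finset (List ℕ)) (p : List ℕ → ℝ) : Prop :=
  (∀ i ∈ I, 0 ≤ p i) ∧ ∑ i ∈ I, p i = 1

/-- `glCaux d χ k = C^{(d)}_{d-k}`, defined by downward recursion. -/
def glCaux (d : ℕ) (chi : ℕ → ℕ → ℝ) : ℕ → ℝ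
  | k => (1 - ∑ j ∈ (Finset.range k).attach,
        glCaux d chi j.1 * chi (d - k) (d - j.1)) / chi (d - k) (d - k)
decreasing_by exact Finset.mem_range.mp j.2

/-- The coefficient `C_n^{(d)}(P)`. -/
def glC (d : ℕ) (lam : List ℕ → ℝ) (Nf : List ℕ → ℕ) (P : ℕ → List ℕ → ℝ) (n : ℕ) : ℝ :=
  glCaux d (fun a m => glLyap lam (glIdx Nf m) a (P m)) (d - n)

/-- Smallest number of sets of diameter at most `δ` needed to cover `Λ`. -/
def coverNum {E : Type*} [EMetricSpace E] (Λ : Set E) (δ : ℝ) : ℕ :=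
  sInf {m : ℕ | ∃ U : Fin m → Set E,
    (∀ k, EMetric.diam (U k) ≤ ENNReal.ofReal δ) ∧ Λ ⊆ ⋃ k, U k}

/-- The affine map `S_i` of a Gatzouras–Lalley system. -/
def glMap (d : ℕ) (lam t : List ℕ → ℝ) (i : List ℕ) (x : EuclideanSpace ℝ (Fin d)) :
    EuclideanSpace ℝ (Fin d) :=
  WithLp.toLp 2 fun k => lam (i.take ((k : ℕ) + 1)) * x k + t (i.take ((k : ℕ) + 1))

def openCube (d : ℕ) : Set (EuclideanSpace ℝ (Fin d)) := {x | ∀ k, x k ∈ Set.Ioo (0:ℝ) 1}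

def closedCube (d : ℕ) : Set (EuclideanSpace ℝ (Fin d)) := {x | ∀ k, x k ∈ Set.Icc (0:ℝ) 1}

/-!
The recursion says that `∑_{m = n}^{d} C_m χ_n(p_m) = 1` for every `n`. Every word of length `m ≤ d`
extends to one of length `d`, so the ordering condition makes the exponents of `p_m` strictly
increasing: `χ_n(p_m) < χ_{n+1}(p_m)` for `n < m`. If `C_d, …, C_{n+1}` are positive, then
`∑_{m > n} C_m χ_n(p_m) < ∑_{m > n} C_m χ_{n+1}(p_m) = 1`, so the numerator of `C_n` is positive.
-/

section Words

variable {Nf : List ℕ → ℕ} {m n : ℕ} {i : List ℕ}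

theorem mem_glIdx_succ :
    i ∈ glIdx Nf (n + 1) ↔ ∃ u ∈ glIdx Nf n, ∃ j < Nf u, u ++ [j + 1] = i := by
  simp only [glIdx, mem_biUnion, mem_image, mem_range]

theorem length_of_mem_glIdx (hi : i ∈ glIdx Nf n) : i.length = n := by
  induction n generalizing i with
  | zero => simpa [glIdx] using hi
  | succ n ih =>
    obtain ⟨u, hu, j, -, rfl⟩ := mem_glIdx_succ.mp hi
    simp [ih hu]

theorem take_append_of_mem_glIdx (hmn : m ≤ n) (hi : i ∈ glIdx Nf n) (v : List ℕ) :
    (i ++ v).take m = i.take m :=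
  List.take_append_of_le_length (hmn.trans_eq (length_of_mem_glIdx hi).symm)

theorem take_eq_self_of_mem_glIdx (hi : i ∈ glIdx Nf n) : i.take n = i :=
  List.take_of_length_le (length_of_mem_glIdx hi).le

theorem take_mem_glIdx (hmn : m ≤ n) (hi : i ∈ glIdx Nf n) : i.take m ∈ glIdx Nf m := by
  induction n, hmn using Nat.le_induction generalizing i with
  | base => rwa [take_eq_self_of_mem_glIdx hi]
  | succ n hmn ih =>
    obtain ⟨u, hu, j, -, rfl⟩ := mem_glIdx_succ.mp hi
    rw [take_append_of_mem_glIdx hmn hu]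
    exact ih hu

theorem exists_mem_glIdx_take_eq (hmn : m ≤ n)
    (hNf : ∀ k, m ≤ k → k < n → ∀ u ∈ glIdx Nf k, 1 ≤ Nf u) (hi : i ∈ glIdx Nf m) :
    ∃ w ∈ glIdx Nf n, w.take m = i := by
  induction n, hmn using Nat.le_induction with
  | base => exact ⟨i, hi, take_eq_self_of_mem_glIdx hi⟩
  | succ n hmn ih =>
    obtain ⟨u, hu, rfl⟩ := ih fun k hmk hkn => hNf k hmk (hkn.trans n.lt_succ_self)
    exact ⟨u ++ [0 + 1], mem_glIdx_succ.mpr ⟨u, hu, 0, hNf n hmn n.lt_succ_self u hu, rfl⟩,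
      take_append_of_mem_glIdx hmn hu _⟩

end Words

theorem sum_mul_lt_sum_mul_of_sum_pos {ι R : Type*} [Semiring R] [LinearOrder R]
    [IsStrictOrderedRing R] {s : Finset ι} {w f g : ι → R} (hw : ∀ i ∈ s, 0 ≤ w i)
    (hw_sum : 0 < ∑ i ∈ s, w i) (hfg : ∀ i ∈ s, f i < g i) :
    ∑ i ∈ s, w i * f i < ∑ i ∈ s, w i * g i := by
  obtain ⟨i, hi, hwi⟩ : ∃ i ∈ s, 0 < w i :=
    exists_lt_of_sum_lt (by simpa only [sum_const_zero] using hw_sum)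
  exact sum_lt_sum (fun j hj => mul_le_mul_of_nonneg_left (hfg j hj).le (hw j hj))
    ⟨i, hi, mul_lt_mul_of_pos_left (hfg i hi) hwi⟩

namespace IsProbVec

variable {I : Finset (List ℕ)} {p : List ℕ → ℝ}

theorem sum_mul_lt_sum_mul (hp : IsProbVec I p) {f g : List ℕ → ℝ}
    (hfg : ∀ i ∈ I, f i < g i) : ∑ i ∈ I, p i * f i < ∑ i ∈ I, p i * g i :=
  sum_mul_lt_sum_mul_of_sum_pos hp.1 (hp.2 ▸ one_pos) hfg

variable {lam : List ℕ → ℝ} {k l : ℕ}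

theorem glLyap_pos (hp : IsProbVec I p) (hlam : ∀ i ∈ I, lam (i.take l) ∈ Set.Ioo (0 : ℝ) 1) :
    0 < glLyap lam I l p := by
  have hsum : ∑ i ∈ I, p i * log (lam (i.take l)) < ∑ i ∈ I, p i * 0 :=
    hp.sum_mul_lt_sum_mul fun i hi => log_neg (hlam i hi).1 (hlam i hi).2
  simpa [glLyap] using hsum

theorem glLyap_lt_glLyap (hp : IsProbVec I p) (hpos : ∀ i ∈ I, 0 < lam (i.take l))
    (hlt : ∀ i ∈ I, lam (i.take l) < lam (i.take k)) :
    glLyap lam I k p < glLyap lam I l p :=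
  neg_lt_neg <| hp.sum_mul_lt_sum_mul fun i hi => log_lt_log (hpos i hi) (hlt i hi)

end IsProbVec

section Coefficients

variable {d k : ℕ} {chi : ℕ → ℕ → ℝ}

theorem glCaux_eq (d : ℕ) (chi : ℕ → ℕ → ℝ) (k : ℕ) :
    glCaux d chi k =
      (1 - ∑ j ∈ range k, glCaux d chi j * chi (d - k) (d - j)) / chi (d - k) (d - k) := by
  rw [glCaux, sum_attach (range k) fun j => glCaux d chi j * chi (d - k) (d - j)]

theorem sum_glCaux_mul_eq_one (hchi : chi (d - k) (d - k) ≠ 0) :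
    ∑ j ∈ range (k + 1), glCaux d chi j * chi (d - k) (d - j) = 1 := by
  rw [sum_range_succ, (eq_div_iff hchi).mp (glCaux_eq d chi k), add_sub_cancel]

theorem glCaux_pos (hk : k ≤ d) (hdiag : ∀ n, d - k ≤ n → n ≤ d → 0 < chi n n)
    (hlt : ∀ n m, d - k ≤ n → n < m → m ≤ d → chi n m < chi (n + 1) m) :
    0 < glCaux d chi k := by
  induction k using Nat.strong_induction_on with
  | _ k ih =>
    have hprev (j : ℕ) (hj : j < k) : 0 < glCaux d chi j :=
      ih j hj (by omega) (fun n hn => hdiag n (by omega)) fun n m hn => hlt n m (by omega)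
    suffices hsum : ∑ j ∈ range k, glCaux d chi j * chi (d - k) (d - j) < 1 by
      rw [glCaux_eq]
      exact div_pos (sub_pos.mpr hsum) (hdiag _ le_rfl (Nat.sub_le d k))
    cases k with
    | zero => simp
    | succ k =>
      have hstep (j : ℕ) (hj : j < k + 1) : chi (d - (k + 1)) (d - j) < chi (d - k) (d - j) := by
        rw [show d - k = d - (k + 1) + 1 by omega]
        exact hlt _ _ le_rfl (by omega) (Nat.sub_le d j)
      calc ∑ j ∈ range (k + 1), glCaux d chi j * chi (d - (k + 1)) (d - j)
          < ∑ j ∈ range (k + 1), glCaux d chi j * chi (d - k) (d - j) :=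
            sum_lt_sum_of_nonempty nonempty_range_add_one fun j hj =>
              mul_lt_mul_of_pos_left (hstep j (mem_range.mp hj)) (hprev j (mem_range.mp hj))
        _ = 1 := sum_glCaux_mul_eq_one (hdiag _ (by omega) (Nat.sub_le d k)).ne'

end Coefficients

theorem apply_take_succ_lt_apply_take {Nf : List ℕ → ℕ} {α : Type*} [LT α] {lam : List ℕ → α}
    {d m l : ℕ} {i : List ℕ} (hmd : m ≤ d)
    (hNf : ∀ k, m ≤ k → k < d → ∀ u ∈ glIdx Nf k, 1 ≤ Nf u)
    (horder : ∀ w ∈ glIdx Nf d, lam (w.take (l + 1)) < lam (w.take l))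
    (hi : i ∈ glIdx Nf m) (hl : l < m) : lam (i.take (l + 1)) < lam (i.take l) := by
  obtain ⟨w, hw, rfl⟩ := exists_mem_glIdx_take_eq hmd hNf hi
  simpa only [List.take_take, min_eq_left hl.le, min_eq_left (Nat.succ_le_of_lt hl)]
    using horder w hw

/-- Under the coordinate ordering condition, all the coefficients
`C_n^{(d)}(P)` are strictly positive. -/
theorem C_coefficients_pos
    (d : ℕ) (hd : 1 ≤ d)
    (Nf : List ℕ → ℕ) (hN : 2 ≤ Nf [])
    (hNf : ∀ n < d, ∀ u ∈ glIdx Nf n, 1 ≤ Nf u)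
    (lam : List ℕ → ℝ)
    (hlam : ∀ n, 1 ≤ n → n ≤ d → ∀ i ∈ glIdx Nf n, lam i ∈ Set.Ioo (0:ℝ) 1)
    (horder : ∀ i ∈ glIdx Nf d, ∀ ℓ, 1 ≤ ℓ → ℓ < d →
      lam (i.take (ℓ + 1)) < lam (i.take ℓ))
    (P : ℕ → List ℕ → ℝ)
    (hP : ∀ n, 1 ≤ n → n ≤ d → IsProbVec (glIdx Nf n) (P n)) :
    ∀ n, 1 ≤ n → n ≤ d → 0 < glC d lam Nf P n := by
  intro n hn hnd
  refine glCaux_pos (Nat.sub_le d n) (fun l hl hld => ?_) fun l m hl hlm hmd => ?_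
  · have hl_one : 1 ≤ l := by omega
    exact (hP l hl_one hld).glLyap_pos fun i hi => hlam l hl_one hld _ (take_mem_glIdx le_rfl hi)
  · have hl_one : 1 ≤ l := by omega
    refine (hP m (by omega) hmd).glLyap_lt_glLyap (fun i hi => ?_) fun i hi => ?_
    · exact (hlam (l + 1) (by omega) (by omega) _ (take_mem_glIdx hlm hi)).1
    · exact apply_take_succ_lt_apply_take hmd (fun k _ => hNf k)
        (fun w hw => horder w hw l hl_one (by omega)) hi hlm
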